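/- arXiv:1608.08421 — 2 statements merged into one kernel-verified Lean document; each statement's English description precedes it below -/
import Mathlib

section
/- For every finite set X of ordinals, the structure (X; ≤, ≤₁, ≤₂) with the relations induced from ℛ₂ is a respecting forest of order 2. -/
open FirstOrder

/-- The relation symbols of the language of `ℛ₂`: three binary relations. -/
inductive ordRel : ℕ → Type
  | le : ordRel 2
  | le1 : ordRel 2
  | le2 : ordRel 2

/-- The first-order language with three binary relation symbols `≤`, `≤₁`, `≤₂`. -/
def ordLang : FirstOrder.Language := ⟨fun _ => Empty, ordRel⟩

/-- The `ordLang`-structure on the set of ordinals below `β`, interpreting the three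
relation symbols by `≤` and the given relations `le1`, `le2`. -/
def segStr (le1 le2 : Ordinal → Ordinal → Prop) (β : Ordinal) :
    ordLang.Structure {x : Ordinal // x < β} where
  funMap := fun f => Empty.elim f
  RelMap
    | .le => fun v => (v 0).1 ≤ (v 1).1
    | .le1 => fun v => le1 (v 0).1 (v 1).1
    | .le2 => fun v => le2 (v 0).1 (v 1).1

/-- Σ₁-formulas: a block of existential quantifiers applied to a quantifier-free formula. -/
inductive IsSigma1 {L : FirstOrder.Language} {α : Type} :
    {n : ℕ} → L.BoundedFormula α n → Prop
  | of_isQF {n} {φ : L.BoundedFormula α n} (h : φ.IsQF) : IsSigma1 φ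
  | ex {n} {φ : L.BoundedFormula α (n + 1)} (h : IsSigma1 φ) : IsSigma1 φ.ex

/-- Π₁-formulas: a block of universal quantifiers applied to a quantifier-free formula. -/
inductive IsPi1 {L : FirstOrder.Language} {α : Type} :
    {n : ℕ} → L.BoundedFormula α n → Prop
  | of_isQF {n} {φ : L.BoundedFormula α n} (h : φ.IsQF) : IsPi1 φ
  | all {n} {φ : L.BoundedFormula α (n + 1)} (h : IsPi1 φ) : IsPi1 φ.all

/-- Σ₂-formulas: a block of existential quantifiers applied to a Π₁-formula. -/
inductive IsSigma2 {L : FirstOrder.Language} {α : Type} :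
    {n : ℕ} → L.BoundedFormula α n → Prop
  | of_isPi1 {n} {φ : L.BoundedFormula α n} (h : IsPi1 φ) : IsSigma2 φ
  | ex {n} {φ : L.BoundedFormula α (n + 1)} (h : IsSigma2 φ) : IsSigma2 φ.ex

/-- Realization of a formula with `k` parameters in the segment structure below `β`. -/
def RealizeIn (le1 le2 : Ordinal → Ordinal → Prop) (β : Ordinal) {k : ℕ}
    (φ : ordLang.Formula (Fin k)) (v : Fin k → {x : Ordinal // x < β}) : Prop :=
  letI := segStr le1 le2 β
  φ.Realize v

/-- `a ≤ b` and the segment below `a` is an elementary substructure of the segment below `b`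
with respect to the class `C` of formulas (with parameters from below `a`). -/
def ElemSub (C : ∀ k : ℕ, ordLang.Formula (Fin k) → Prop)
    (le1 le2 : Ordinal → Ordinal → Prop) (a b : Ordinal) : Prop :=
  ∃ hab : a ≤ b,
    ∀ (k : ℕ) (φ : ordLang.Formula (Fin k)), C k φ →
      ∀ v : Fin k → {x : Ordinal // x < a},
        RealizeIn le1 le2 a φ v ↔
          RealizeIn le1 le2 b φ (fun j => ⟨(v j).1, lt_of_lt_of_le (v j).2 hab⟩)

/-- The pair of relations `le1`, `le2` satisfies the simultaneous recursive definition of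
`≤₁` and `≤₂` on the ordinals: `α ≤ᵢ β` iff `α ≤ β` and the segment below `α` is a
Σᵢ-elementary substructure of the segment below `β`. -/
def IsR2Pair (le1 le2 : Ordinal → Ordinal → Prop) : Prop :=
  (∀ a b, le1 a b ↔ ElemSub (fun _ φ => IsSigma1 φ) le1 le2 a b) ∧
  (∀ a b, le2 a b ↔ ElemSub (fun _ φ => IsSigma2 φ) le1 le2 a b)

/-- The strict part of `≤₁`. -/
def Lt1 (le1 : Ordinal → Ordinal → Prop) (a b : Ordinal) : Prop := le1 a b ∧ a ≠ b

/-- The strict part of `≤₂`. -/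
def Lt2 (le2 : Ordinal → Ordinal → Prop) (a b : Ordinal) : Prop := le2 a b ∧ a ≠ b

/-- `1^∞`: the least ordinal `ν` such that below `ν` there are `<₂`-chains of every finite
length. -/
noncomputable def OneInfty (le2 : Ordinal → Ordinal → Prop) : Ordinal :=
  sInf {ν : Ordinal | ∀ n : ℕ, ∃ β : Fin n → Ordinal,
    (∀ i, β i < ν) ∧
    ∀ (i : ℕ) (hi : i + 1 < n), Lt2 le2 (β ⟨i, Nat.lt_of_succ_lt hi⟩) (β ⟨i + 1, hi⟩)}

/-- A respecting forest of order 2: a finite structure with a linear order `≤₀` and partial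
orders `≤₁`, `≤₂` which are forests, with `≤₂ ⊆ ≤₁ ⊆ ≤₀`, and `≤ᵢ₊₁` respecting `≤ᵢ`. -/
structure RForest where
  P : Type
  [fintypeP : Fintype P]
  le0 : P → P → Prop
  le1 : P → P → Prop
  le2 : P → P → Prop
  le0_refl : ∀ p, le0 p p
  le0_trans : ∀ p q r, le0 p q → le0 q r → le0 p r
  le0_antisymm : ∀ p q, le0 p q → le0 q p → p = q
  le0_total : ∀ p q, le0 p q ∨ le0 q p
  le1_refl : ∀ p, le1 p p
  le1_trans : ∀ p q r, le1 p q → le1 q r → le1 p r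
  le1_antisymm : ∀ p q, le1 p q → le1 q p → p = q
  le2_refl : ∀ p, le2 p p
  le2_trans : ∀ p q r, le2 p q → le2 q r → le2 p r
  le2_antisymm : ∀ p q, le2 p q → le2 q p → p = q
  le2_sub_le1 : ∀ p q, le2 p q → le1 p q
  le1_sub_le0 : ∀ p q, le1 p q → le0 p q
  forest1 : ∀ p q r, le1 q p → le1 r p → le1 q r ∨ le1 r q
  forest2 : ∀ p q r, le2 q p → le2 r p → le2 q r ∨ le2 r q
  respects1 : ∀ p q r, le0 p q → le0 q r → le1 p r → le1 p q
  respects2 : ∀ p q r, le1 p q → le1 q r → le2 p r → le2 p q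

attribute [instance] RForest.fintypeP

/-- The finite set `X` of ordinals, with the relations induced from `ℛ₂`, is isomorphic to the
respecting forest `F`. -/
def Realizes (le1 le2 : Ordinal → Ordinal → Prop) (F : RForest) (X : Finset Ordinal) : Prop :=
  ∃ e : F.P ≃ {x // x ∈ X}, ∀ p q : F.P,
    (F.le0 p q ↔ ((e p : Ordinal) ≤ (e q : Ordinal))) ∧
    (F.le1 p q ↔ le1 (e p : Ordinal) (e q : Ordinal)) ∧
    (F.le2 p q ↔ le2 (e p : Ordinal) (e q : Ordinal))

/-- Pointwise comparison of two finite sets of ordinals via their increasing enumerations. -/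
def pwLE (X Y : Finset Ordinal) : Prop :=
  ∃ h : X.card = Y.card, ∀ i : Fin X.card,
    ((X.orderIsoOfFin rfl i : {x // x ∈ X}) : Ordinal) ≤
      ((Y.orderIsoOfFin h.symm i : {x // x ∈ Y}) : Ordinal)

/-- `X` is the isominimal realization of the respecting forest `F` in `ℛ₂`: it is isomorphic
to `F` and pointwise minimal among all finite substructures of `ℛ₂` isomorphic to `F`. -/
def IsIsominimalRealization (le1 le2 : Ordinal → Ordinal → Prop) (F : RForest)
    (X : Finset Ordinal) : Prop :=
  Realizes le1 le2 F X ∧ ∀ Y : Finset Ordinal, Realizes le1 le2 F Y → pwLE X Y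

/-- A covering of the respecting forest `F` into `ℛ₂`. -/
def IsCovering (le1 le2 : Ordinal → Ordinal → Prop) (F : RForest)
    (c : F.P → Ordinal) : Prop :=
  (∀ p q, F.le0 p q ↔ c p ≤ c q) ∧
  (∀ p q, F.le1 p q → le1 (c p) (c q)) ∧
  (∀ p q, F.le2 p q → le2 (c p) (c q))


/-- A covering of the respecting forest `F` into the respecting forest `G`. -/
def ForestCovering (F G : RForest) (f : F.P → G.P) : Prop :=
  (∀ p q, F.le0 p q ↔ G.le0 (f p) (f q)) ∧
  (∀ p q, F.le1 p q → G.le1 (f p) (f q)) ∧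
  (∀ p q, F.le2 p q → G.le2 (f p) (f q))

/-!
Each condition on `≤₁` and `≤₂` follows from the way formulas transfer along the inclusions of
segments. Existential formulas are preserved by every embedding, so if `α ≤ β ≤ γ` and
`α ≤₁ γ`, a Σ₁-formula true in `β` is true in `γ`, hence in `α`. One level up, a Σ₁-elementary
map preserves Π₁-formulas, the negations of Σ₁-formulas, and therefore Σ₂-formulas; the same
argument then gives `α ≤₂ β` from `α ≤₁ β ≤₁ γ` and `α ≤₂ γ`. The forest conditions are instances
of these two, because ordinals are linearly ordered.
-/

section Formulas

open FirstOrder.Language BoundedFormula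

universe u v w

variable {L : FirstOrder.Language.{u, v}}

theorem isQF_toFormula {α : Type w} {n : ℕ} {φ : L.BoundedFormula α n} (hφ : φ.IsQF) :
    φ.toFormula.IsQF := by
  induction hφ with
  | falsum => exact .falsum
  | of_isAtomic hφ =>
    cases hφ with
    | equal t₁ t₂ => exact (IsAtomic.equal _ _).isQF
    | rel R ts => exact (IsAtomic.rel R _).isQF
  | imp _ _ ih₁ ih₂ => exact ih₁.imp ih₂

/-- The negation of a formula, pushed inside its leading block of universal quantifiers. It turns
Π₁-formulas into Σ₁-formulas, whereas `BoundedFormula.not` keeps the negation in front. -/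
def pushNot {α : Type w} : ∀ {n : ℕ}, L.BoundedFormula α n → L.BoundedFormula α n
  | _, .all φ => (pushNot φ).ex
  | _, φ => φ.not

theorem realize_pushNot {α : Type w} {M : Type*} [L.Structure M] {n : ℕ}
    (φ : L.BoundedFormula α n) (v : α → M) (xs : Fin n → M) :
    (pushNot φ).Realize v xs ↔ ¬φ.Realize v xs := by
  induction φ with
  | all φ ih => simp only [pushNot, realize_ex, realize_all, ih, not_forall]
  | falsum | equal | rel | imp => exact realize_not

theorem pushNot_of_isQF {α : Type w} {n : ℕ} {φ : L.BoundedFormula α n} (hφ : φ.IsQF) :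
    pushNot φ = φ.not := by
  cases φ with
  | all φ => exact absurd hφ φ.not_all_isQF
  | falsum | equal | rel | imp => rfl

variable {α : Type} {n : ℕ} {φ : L.BoundedFormula α n}

theorem IsPi1.isSigma1_pushNot (hφ : IsPi1 φ) : IsSigma1 (pushNot φ) := by
  induction hφ with
  | of_isQF hφ => exact pushNot_of_isQF hφ ▸ .of_isQF hφ.not
  | all _ ih => exact .ex ih

namespace IsSigma1

theorem isExistential (hφ : IsSigma1 φ) : φ.IsExistential := by
  induction hφ with
  | of_isQF hφ => exact .of_isQF hφ
  | ex _ ih => exact .ex ih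

theorem isSigma2 (hφ : IsSigma1 φ) : IsSigma2 φ := by
  induction hφ with
  | of_isQF hφ => exact .of_isPi1 (.of_isQF hφ)
  | ex _ ih => exact .ex ih

theorem relabel {β : Type} {m : ℕ} (hφ : IsSigma1 φ) (g : α → β ⊕ Fin m) :
    IsSigma1 (φ.relabel g) := by
  induction hφ with
  | of_isQF hφ => exact .of_isQF (hφ.relabel g)
  | ex _ ih => exact relabel_ex g _ ▸ .ex ih

theorem toFormula (hφ : IsSigma1 φ) : IsSigma1 φ.toFormula := by
  induction hφ with
  | of_isQF hφ => exact .of_isQF (isQF_toFormula hφ)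
  | ex _ ih => exact .ex (ih.relabel _)

end IsSigma1

end Formulas

section Elementarity

open FirstOrder.Language

universe u v

variable {L : FirstOrder.Language.{u, v}} {M N P : Type*}
  [L.Structure M] [L.Structure N] [L.Structure P] {C : ∀ k : ℕ, L.Formula (Fin k) → Prop}
  {f : M → N} {g : N → P}

/-- `f` preserves the truth of the formulas in the class `C`: the upward half of elementarity with
respect to `C`. -/
def PreservesFormulas (C : ∀ k : ℕ, L.Formula (Fin k) → Prop) (f : M → N) : Prop :=
  ∀ (k : ℕ) (φ : L.Formula (Fin k)), C k φ → ∀ v : Fin k → M, φ.Realize v → φ.Realize (f ∘ v)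

/-- `f` is elementary with respect to the class `C` of formulas. This is the notion of which
`ElemSub` is the case of an inclusion of segments. -/
def IsElementaryFor (C : ∀ k : ℕ, L.Formula (Fin k) → Prop) (f : M → N) : Prop :=
  ∀ (k : ℕ) (φ : L.Formula (Fin k)), C k φ → ∀ v : Fin k → M, φ.Realize v ↔ φ.Realize (f ∘ v)

/-- `f` is Σ₁-elementary. -/
abbrev IsSigma1Elementary (L : FirstOrder.Language.{u, v}) [L.Structure M] [L.Structure N]
    (f : M → N) : Prop :=
  IsElementaryFor (L := L) (fun _ φ => IsSigma1 φ) f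

theorem IsElementaryFor.of_comp (hf : PreservesFormulas C f) (hg : PreservesFormulas C g)
    (hgf : IsElementaryFor C (g ∘ f)) : IsElementaryFor C f := fun k φ hφ v =>
  ⟨hf k φ hφ v, fun hv => (hgf k φ hφ v).2 (hg k φ hφ _ hv)⟩

theorem preservesFormulas_isSigma1 (f : M ↪[L] N) :
    PreservesFormulas (L := L) (fun _ φ => IsSigma1 φ) f := by
  intro _ _ hφ _ hv
  have hfv := hφ.isExistential.realize_embedding f hv
  rwa [Subsingleton.elim (f ∘ (default : Fin 0 → M)) default] at hfv

namespace IsSigma1Elementary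

variable {α : Type} [Finite α]

theorem realize_iff (hf : IsSigma1Elementary L f) {φ : L.Formula α} (hφ : IsSigma1 φ)
    (v : α → M) : φ.Realize v ↔ φ.Realize (f ∘ v) := by
  obtain ⟨k, ⟨e⟩⟩ := Finite.exists_equiv_fin α
  have hv := hf k (φ.relabel e) (hφ.relabel _) (v ∘ e.symm)
  simpa only [Formula.realize_relabel, Function.comp_assoc, e.symm_comp_self,
    Function.comp_id] using hv

variable {n : ℕ} {φ : L.BoundedFormula α n} {v : α → M} {xs : Fin n → M}

theorem realize_of_isPi1 (hf : IsSigma1Elementary L f) (hφ : IsPi1 φ) (hv : φ.Realize v xs) :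
    φ.Realize (f ∘ v) (f ∘ xs) := by
  -- `toFormula` turns the variables `xs` into parameters, the only ones elementarity speaks about.
  have hneg : ¬φ.Realize v xs ↔ ¬φ.Realize (f ∘ v) (f ∘ xs) := by
    simpa only [BoundedFormula.realize_toFormula, Function.comp_assoc, Sum.elim_comp_inl,
      Sum.elim_comp_inr, realize_pushNot] using
      hf.realize_iff hφ.isSigma1_pushNot.toFormula (Sum.elim v xs)
  exact (not_iff_not.1 hneg).1 hv

theorem realize_of_isSigma2 (hf : IsSigma1Elementary L f) (hφ : IsSigma2 φ)
    (hv : φ.Realize v xs) : φ.Realize (f ∘ v) (f ∘ xs) := by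
  induction hφ with
  | of_isPi1 hφ => exact hf.realize_of_isPi1 hφ hv
  | ex _ ih =>
    obtain ⟨x, hx⟩ := BoundedFormula.realize_ex.1 hv
    exact BoundedFormula.realize_ex.2 ⟨f x, Fin.comp_snoc f xs x ▸ ih hx⟩

theorem preservesFormulas_isSigma2 (hf : IsSigma1Elementary L f) :
    PreservesFormulas (L := L) (fun _ φ => IsSigma2 φ) f := by
  intro _ _ hφ _ hv
  have hfv := hf.realize_of_isSigma2 hφ hv
  rwa [Subsingleton.elim (f ∘ (default : Fin 0 → M)) default] at hfv

end IsSigma1Elementary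

end Elementarity

section Segments

variable {le1 le2 : Ordinal → Ordinal → Prop} {a b c : Ordinal}

/-- The ordinals below `β`, as a type that remembers `le1` and `le2`, so that `segStr` can be
found by instance resolution. -/
def Segment (_le1 _le2 : Ordinal → Ordinal → Prop) (β : Ordinal) : Type _ :=
  {x : Ordinal // x < β}

instance (β : Ordinal) : ordLang.Structure (Segment le1 le2 β) := segStr le1 le2 β

/-- The inclusion of the segment below `a` into the segment below `b`, as an embedding of
structures. -/
def Segment.inclusion (le1 le2 : Ordinal → Ordinal → Prop) (hab : a ≤ b) :
    Segment le1 le2 a ↪[ordLang] Segment le1 le2 b where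
  toFun x := ⟨x.1, x.2.trans_le hab⟩
  inj' _ _ hxy := Subtype.ext (Subtype.mk.inj hxy)
  map_fun' F := F.elim
  map_rel' R _ := by cases R <;> rfl

namespace ElemSub

variable {C D : ∀ k : ℕ, ordLang.Formula (Fin k) → Prop}

theorem le (h : ElemSub C le1 le2 a b) : a ≤ b := h.1

theorem isElementaryFor (h : ElemSub C le1 le2 a b) :
    IsElementaryFor C (Segment.inclusion le1 le2 h.le) := h.2

theorem refl (C : ∀ k : ℕ, ordLang.Formula (Fin k) → Prop) (le1 le2 : Ordinal → Ordinal → Prop)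
    (a : Ordinal) : ElemSub C le1 le2 a a :=
  ⟨le_rfl, fun _ _ _ _ => Iff.rfl⟩

theorem trans (hab : ElemSub C le1 le2 a b) (hbc : ElemSub C le1 le2 b c) :
    ElemSub C le1 le2 a c :=
  ⟨hab.le.trans hbc.le, fun k φ hφ v => (hab.2 k φ hφ v).trans (hbc.2 k φ hφ _)⟩

theorem mono (hCD : ∀ k φ, C k φ → D k φ) (h : ElemSub D le1 le2 a b) : ElemSub C le1 le2 a b :=
  ⟨h.le, fun k φ hφ => h.2 k φ (hCD k φ hφ)⟩

theorem of_preservesFormulas {hab : a ≤ b} {hbc : b ≤ c}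
    (hf : PreservesFormulas C (Segment.inclusion le1 le2 hab))
    (hg : PreservesFormulas C (Segment.inclusion le1 le2 hbc))
    (h : ElemSub C le1 le2 a c) : ElemSub C le1 le2 a b :=
  ⟨hab, IsElementaryFor.of_comp hf hg h.isElementaryFor⟩

end ElemSub

end Segments

namespace IsR2Pair

variable {le1 le2 : Ordinal → Ordinal → Prop} {p q r : Ordinal}

theorem le_of_le1 (h : IsR2Pair le1 le2) (hpq : le1 p q) : p ≤ q := ((h.1 p q).1 hpq).le

theorem le1_of_le2 (h : IsR2Pair le1 le2) (hpq : le2 p q) : le1 p q :=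
  (h.1 p q).2 (((h.2 p q).1 hpq).mono fun _ _ hφ => hφ.isSigma2)

theorem le_of_le2 (h : IsR2Pair le1 le2) (hpq : le2 p q) : p ≤ q := h.le_of_le1 (h.le1_of_le2 hpq)

theorem le1_refl (h : IsR2Pair le1 le2) (p : Ordinal) : le1 p p :=
  (h.1 p p).2 (.refl _ _ _ p)

theorem le2_refl (h : IsR2Pair le1 le2) (p : Ordinal) : le2 p p :=
  (h.2 p p).2 (.refl _ _ _ p)

theorem le1_trans (h : IsR2Pair le1 le2) (hpq : le1 p q) (hqr : le1 q r) : le1 p r :=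
  (h.1 p r).2 (((h.1 p q).1 hpq).trans ((h.1 q r).1 hqr))

theorem le2_trans (h : IsR2Pair le1 le2) (hpq : le2 p q) (hqr : le2 q r) : le2 p r :=
  (h.2 p r).2 (((h.2 p q).1 hpq).trans ((h.2 q r).1 hqr))

theorem le1_respects_le (h : IsR2Pair le1 le2) (hpq : p ≤ q) (hqr : q ≤ r) (hpr : le1 p r) :
    le1 p q :=
  (h.1 p q).2 (((h.1 p r).1 hpr).of_preservesFormulas
    (preservesFormulas_isSigma1 (Segment.inclusion le1 le2 hpq))
    (preservesFormulas_isSigma1 (Segment.inclusion le1 le2 hqr)))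

theorem le2_respects_le1 (h : IsR2Pair le1 le2) (hpq : le1 p q) (hqr : le1 q r)
    (hpr : le2 p r) : le2 p q :=
  (h.2 p q).2 (((h.2 p r).1 hpr).of_preservesFormulas
    (IsSigma1Elementary.preservesFormulas_isSigma2 ((h.1 p q).1 hpq).isElementaryFor)
    (IsSigma1Elementary.preservesFormulas_isSigma2 ((h.1 q r).1 hqr).isElementaryFor))

theorem le1_of_le_of_le1 (h : IsR2Pair le1 le2) (hqr : q ≤ r) (hqp : le1 q p) (hrp : le1 r p) :
    le1 q r :=
  h.le1_respects_le hqr (h.le_of_le1 hrp) hqp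

theorem le2_of_le_of_le2 (h : IsR2Pair le1 le2) (hqr : q ≤ r) (hqp : le2 q p) (hrp : le2 r p) :
    le2 q r :=
  h.le2_respects_le1 (h.le1_of_le_of_le1 hqr (h.le1_of_le2 hqp) (h.le1_of_le2 hrp))
    (h.le1_of_le2 hrp) hqp

theorem le1_total_of_le1 (h : IsR2Pair le1 le2) (hqp : le1 q p) (hrp : le1 r p) :
    le1 q r ∨ le1 r q :=
  (le_total q r).imp (h.le1_of_le_of_le1 · hqp hrp) (h.le1_of_le_of_le1 · hrp hqp)

theorem le2_total_of_le2 (h : IsR2Pair le1 le2) (hqp : le2 q p) (hrp : le2 r p) :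
    le2 q r ∨ le2 r q :=
  (le_total q r).imp (h.le2_of_le_of_le2 · hqp hrp) (h.le2_of_le_of_le2 · hrp hqp)

end IsR2Pair

theorem stmt3_general (le1 le2 : Ordinal → Ordinal → Prop) (h : IsR2Pair le1 le2)
    (X : Set Ordinal) :
    (∀ a ∈ X, le1 a a) ∧
    (∀ a ∈ X, ∀ b ∈ X, ∀ c ∈ X, le1 a b → le1 b c → le1 a c) ∧
    (∀ a ∈ X, ∀ b ∈ X, le1 a b → le1 b a → a = b) ∧
    (∀ a ∈ X, le2 a a) ∧
    (∀ a ∈ X, ∀ b ∈ X, ∀ c ∈ X, le2 a b → le2 b c → le2 a c) ∧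
    (∀ a ∈ X, ∀ b ∈ X, le2 a b → le2 b a → a = b) ∧
    (∀ a ∈ X, ∀ b ∈ X, le2 a b → le1 a b) ∧
    (∀ a ∈ X, ∀ b ∈ X, le1 a b → a ≤ b) ∧
    (∀ p ∈ X, ∀ q ∈ X, ∀ r ∈ X, le1 q p → le1 r p → le1 q r ∨ le1 r q) ∧
    (∀ p ∈ X, ∀ q ∈ X, ∀ r ∈ X, le2 q p → le2 r p → le2 q r ∨ le2 r q) ∧
    (∀ p ∈ X, ∀ q ∈ X, ∀ r ∈ X, p ≤ q → q ≤ r → le1 p r → le1 p q) ∧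
    (∀ p ∈ X, ∀ q ∈ X, ∀ r ∈ X, le1 p q → le1 q r → le2 p r → le2 p q) :=
  ⟨fun a _ => h.le1_refl a,
    fun _ _ _ _ _ _ hab hbc => h.le1_trans hab hbc,
    fun _ _ _ _ hab hba => (h.le_of_le1 hab).antisymm (h.le_of_le1 hba),
    fun a _ => h.le2_refl a,
    fun _ _ _ _ _ _ hab hbc => h.le2_trans hab hbc,
    fun _ _ _ _ hab hba => (h.le_of_le2 hab).antisymm (h.le_of_le2 hba),
    fun _ _ _ _ hab => h.le1_of_le2 hab,
    fun _ _ _ _ hab => h.le_of_le1 hab,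
    fun _ _ _ _ _ _ hqp hrp => h.le1_total_of_le1 hqp hrp,
    fun _ _ _ _ _ _ hqp hrp => h.le2_total_of_le2 hqp hrp,
    fun _ _ _ _ _ _ hpq hqr hpr => h.le1_respects_le hpq hqr hpr,
    fun _ _ _ _ _ _ hpq hqr hpr => h.le2_respects_le1 hpq hqr hpr⟩

theorem stmt3 (le1 le2 : Ordinal → Ordinal → Prop) (h : IsR2Pair le1 le2)
    (X : Finset Ordinal) :
    (∀ a ∈ X, le1 a a) ∧
    (∀ a ∈ X, ∀ b ∈ X, ∀ c ∈ X, le1 a b → le1 b c → le1 a c) ∧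
    (∀ a ∈ X, ∀ b ∈ X, le1 a b → le1 b a → a = b) ∧
    (∀ a ∈ X, le2 a a) ∧
    (∀ a ∈ X, ∀ b ∈ X, ∀ c ∈ X, le2 a b → le2 b c → le2 a c) ∧
    (∀ a ∈ X, ∀ b ∈ X, le2 a b → le2 b a → a = b) ∧
    (∀ a ∈ X, ∀ b ∈ X, le2 a b → le1 a b) ∧
    (∀ a ∈ X, ∀ b ∈ X, le1 a b → a ≤ b) ∧
    (∀ p ∈ X, ∀ q ∈ X, ∀ r ∈ X, le1 q p → le1 r p → le1 q r ∨ le1 r q) ∧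
    (∀ p ∈ X, ∀ q ∈ X, ∀ r ∈ X, le2 q p → le2 r p → le2 q r ∨ le2 r q) ∧
    (∀ p ∈ X, ∀ q ∈ X, ∀ r ∈ X, p ≤ q → q ≤ r → le1 p r → le1 p q) ∧
    (∀ p ∈ X, ∀ q ∈ X, ∀ r ∈ X, le1 p q → le1 q r → le2 p r → le2 p q) :=
  stmt3_general le1 le2 h X
end

section
/- For every ordinal α < 1^∞, the class {β : α ≤₂ β} has a greatest element, denoted lh₂(α); in particular lh₂(α) = α exactly when α has no <₂-successor. -/
open FirstOrder

/-
If `α < 1^∞` and `α ≤₂ β`, then `β < 1^∞`: the existence of a `<₂`-chain of length `n` is a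
Σ₁-sentence, so if `1^∞ ≤ β`, the chains of all finite lengths below `1^∞` would be reflected below
`α`. Hence `{β | α ≤₂ β}` is bounded. Its supremum belongs to it because Σ₂-elementary extensions of
a fixed structure are closed under directed unions: a Π₁-formula holds in a directed union as soon
as it holds in all members containing its parameters, and a Σ₂-formula of the union already holds in
some member.
-/

open FirstOrder.Language

section Syntactic

variable {L : Language} {α γ : Type} {m n : ℕ} {φ : L.BoundedFormula α n}

theorem isQF_iInf {ι : Type*} [Finite ι] {f : ι → L.BoundedFormula α n} (hf : ∀ i, (f i).IsQF) :
    (BoundedFormula.iInf f).IsQF := by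
  refine List.foldrRecOn _ _ .top fun ψ hψ χ hχ => .inf ?_ hψ
  obtain ⟨i, -, rfl⟩ := List.mem_map.1 hχ
  exact hf i

theorem isQF_toFormula_s10 (hφ : φ.IsQF) : φ.toFormula.IsQF := by
  induction hφ with
  | falsum => exact .falsum
  | of_isAtomic h =>
    cases h with
    | equal t₁ t₂ => exact (BoundedFormula.IsAtomic.equal _ _).isQF
    | rel R ts => exact (BoundedFormula.IsAtomic.rel _ _).isQF
  | imp _ _ ih₁ ih₂ => exact ih₁.imp ih₂

theorem IsPi1.relabel (hφ : IsPi1 φ) (g : α → γ ⊕ Fin m) : IsPi1 (φ.relabel g) := by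
  induction hφ with
  | of_isQF h => exact .of_isQF (h.relabel g)
  | all _ ih =>
    rw [BoundedFormula.relabel_all]
    exact .all ih

theorem IsPi1.toFormula (hφ : IsPi1 φ) : IsPi1 φ.toFormula := by
  induction hφ with
  | of_isQF h => exact .of_isQF (isQF_toFormula_s10 h)
  | all _ ih => exact .all (ih.relabel _)

theorem IsSigma2.exs (hφ : IsSigma2 φ) : IsSigma2 φ.exs := by
  induction n with
  | zero => exact hφ
  | succ n ih => exact ih (.ex hφ)

end Syntactic

section Preservation

variable {L : Language} {M N : Type*} [L.Structure M] [L.Structure N] {α : Type} {n : ℕ}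
  {φ : L.BoundedFormula α n}

/-- The map `f` preserves and reflects Σ₂-formulas with parameters. As in `ElemSub`, a formula has
its free variables indexed by some `Fin k`. -/
def IsSigma2Elementary (L : Language) {M N : Type*} [L.Structure M] [L.Structure N]
    (f : M → N) : Prop :=
  ∀ (k : ℕ) (φ : L.Formula (Fin k)), IsSigma2 φ → ∀ v : Fin k → M, φ.Realize v ↔ φ.Realize (f ∘ v)

theorem IsSigma2Elementary.realize_iff_of_isPi1 [Finite α] {f : M → N}
    (hf : IsSigma2Elementary L f) (hφ : IsPi1 φ) (v : α → M) (xs : Fin n → M) :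
    φ.Realize v xs ↔ φ.Realize (f ∘ v) (f ∘ xs) := by
  obtain ⟨k, ⟨e⟩⟩ := Finite.exists_equiv_fin (α ⊕ Fin n)
  have key := hf k (φ.toFormula.relabel e) (.of_isPi1 (hφ.toFormula.relabel _))
    (Sum.elim v xs ∘ e.symm)
  simpa only [Formula.realize_relabel, BoundedFormula.realize_toFormula, Function.comp_assoc,
    Equiv.symm_comp_self, Function.comp_id, Sum.elim_comp_inl, Sum.elim_comp_inr] using key

theorem IsPi1.realize_of_comp_embedding (hφ : IsPi1 φ) (f : M ↪[L] N) (v : α → M) (xs : Fin n → M)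
    (h : φ.Realize (f ∘ v) (f ∘ xs)) : φ.Realize v xs := by
  induction hφ with
  | of_isQF hψ => exact (hψ.realize_embedding f).1 h
  | all _ ih =>
    rw [BoundedFormula.realize_all] at h ⊢
    intro x
    apply ih
    rw [Fin.comp_snoc]
    exact h (f x)

theorem IsSigma2.realize_comp_of_isPi1 (hφ : IsSigma2 φ) {f : M → N} {v : α → M}
    (hf : ∀ {m : ℕ} {ψ : L.BoundedFormula α m}, IsPi1 ψ → ∀ xs : Fin m → M,
      ψ.Realize v xs → ψ.Realize (f ∘ v) (f ∘ xs))
    (xs : Fin n → M) (h : φ.Realize v xs) : φ.Realize (f ∘ v) (f ∘ xs) := by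
  induction hφ with
  | of_isPi1 hψ => exact hf hψ xs h
  | ex _ ih =>
    rw [BoundedFormula.realize_ex] at h ⊢
    obtain ⟨x, hx⟩ := h
    exact ⟨f x, Fin.comp_snoc f xs x ▸ ih _ hx⟩

end Preservation

section DirectedUnion

theorem exists_comp_eq_comp_eq_of_directed_range {ι : Type*} [Nonempty ι] {M : ι → Type*}
    {N : Type*} {f : ∀ i, M i → N} (hdir : Directed (· ⊆ ·) fun i => Set.range (f i))
    (hcover : ⋃ i, Set.range (f i) = Set.univ) {β γ : Type*} [Finite β] [Finite γ]
    (v : β → N) (u : γ → N) :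
    ∃ (i : ι) (w : β → M i) (y : γ → M i), f i ∘ w = v ∧ f i ∘ y = u := by
  obtain ⟨i, hi⟩ := hdir.exists_mem_subset_of_finset_subset_biUnion
    (s := ((Set.finite_range v).union (Set.finite_range u)).toFinset) (by simp [hcover])
  rw [Set.Finite.coe_toFinset, Set.union_subset_iff] at hi
  obtain ⟨w, hw⟩ := Set.range_subset_range_iff_exists_comp.1 hi.1
  obtain ⟨y, hy⟩ := Set.range_subset_range_iff_exists_comp.1 hi.2
  exact ⟨i, w, y, hw.symm, hy.symm⟩

variable {L : Language} {ι : Type*} [Nonempty ι] {M : ι → Type*} {N : Type*}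
  [∀ i, L.Structure (M i)] [L.Structure N] {f : ∀ i, M i ↪[L] N} {α : Type} [Finite α] {n : ℕ}
  {φ : L.BoundedFormula α n}

theorem IsPi1.realize_of_forall_lift (hφ : IsPi1 φ)
    (hdir : Directed (· ⊆ ·) fun i => Set.range (f i))
    (hcover : ⋃ i, Set.range (f i) = Set.univ) (v : α → N) (xs : Fin n → N)
    (h : ∀ (i : ι) (w : α → M i) (ys : Fin n → M i),
      f i ∘ w = v → f i ∘ ys = xs → φ.Realize w ys) :
    φ.Realize v xs := by
  induction hφ with
  | of_isQF hψ =>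
    obtain ⟨i, w, ys, rfl, rfl⟩ := exists_comp_eq_comp_eq_of_directed_range hdir hcover v xs
    exact (hψ.realize_embedding (f i)).2 (h i w ys rfl rfl)
  | all _ ih =>
    rw [BoundedFormula.realize_all]
    refine fun x => ih _ fun i w ys hw hys => ?_
    have h_init : f i ∘ Fin.init ys = xs := by
      rw [Fin.comp_init, hys, Fin.init_snoc]
    have h_all := BoundedFormula.realize_all.1 (h i w _ hw h_init) (ys (Fin.last _))
    rwa [Fin.snoc_init_self] at h_all

theorem IsSigma2.exists_lift_realize (hφ : IsSigma2 φ)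
    (hdir : Directed (· ⊆ ·) fun i => Set.range (f i))
    (hcover : ⋃ i, Set.range (f i) = Set.univ) (v : α → N) (xs : Fin n → N)
    (h : φ.Realize v xs) :
    ∃ (i : ι) (w : α → M i) (ys : Fin n → M i),
      f i ∘ w = v ∧ f i ∘ ys = xs ∧ φ.Realize w ys := by
  induction hφ with
  | of_isPi1 hψ =>
    obtain ⟨i, w, ys, rfl, rfl⟩ := exists_comp_eq_comp_eq_of_directed_range hdir hcover v xs
    exact ⟨i, w, ys, rfl, rfl, hψ.realize_of_comp_embedding (f i) w ys h⟩
  | ex _ ih =>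
    obtain ⟨x, hx⟩ := BoundedFormula.realize_ex.1 h
    obtain ⟨i, w, ys, hw, hys, hr⟩ := ih _ hx
    refine ⟨i, w, Fin.init ys, hw, by rw [Fin.comp_init, hys, Fin.init_snoc], ?_⟩
    rw [← Fin.snoc_init_self ys] at hr
    exact BoundedFormula.realize_ex.2 ⟨_, hr⟩

theorem isSigma2Elementary_of_directed {A : Type*} [L.Structure A]
    (hdir : Directed (· ⊆ ·) fun i => Set.range (f i))
    (hcover : ⋃ i, Set.range (f i) = Set.univ) {g : A → N} {g' : ∀ i, A → M i}
    (hcomp : ∀ i, f i ∘ g' i = g) (hg' : ∀ i, IsSigma2Elementary L (g' i)) :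
    IsSigma2Elementary L g := by
  have lift_eq {β : Type} {i : ι} {w : β → M i} {u : β → A} (h : f i ∘ w = g ∘ u) :
      w = g' i ∘ u := by
    rw [← hcomp i, Function.comp_assoc] at h
    exact (f i).injective.comp_left h
  refine fun k φ hφ v => ⟨fun h => ?_, fun h => ?_⟩
  · have pi1_up {m : ℕ} {ψ : L.BoundedFormula (Fin k) m} (hψ : IsPi1 ψ) (xs : Fin m → A)
        (h : ψ.Realize v xs) : ψ.Realize (g ∘ v) (g ∘ xs) :=
      hψ.realize_of_forall_lift hdir hcover _ _ fun i w ys hw hys => by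
        rw [lift_eq hw, lift_eq hys]
        exact ((hg' i).realize_iff_of_isPi1 hψ v xs).1 h
    have hr := hφ.realize_comp_of_isPi1 pi1_up default h
    rwa [Unique.eq_default (g ∘ (default : Fin 0 → A))] at hr
  · obtain ⟨i, w, ys, hw, -, hr⟩ := hφ.exists_lift_realize hdir hcover _ _ h
    rw [lift_eq hw, Unique.eq_default ys] at hr
    exact (hg' i k φ hφ v).2 hr

end DirectedUnion

section Segments

variable {le1 le2 : Ordinal → Ordinal → Prop} {a b : Ordinal}

/-- The segment below `β` as a type synonym mentioning `le1` and `le2`, so that the structure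
`segStr le1 le2 β` can be found by instance resolution. -/
def Seg (_le1 _le2 : Ordinal → Ordinal → Prop) (β : Ordinal) := {x : Ordinal // x < β}

instance : ordLang.Structure (Seg le1 le2 b) := segStr le1 le2 b

/-- The inclusion of the segment below `a` into the segment below `b`, as an embedding of
structures. -/
def Seg.incl (le1 le2 : Ordinal → Ordinal → Prop) (hab : a ≤ b) :
    Seg le1 le2 a ↪[ordLang] Seg le1 le2 b where
  toFun x := ⟨x.1, x.2.trans_le hab⟩
  inj' _ _ hxy := Subtype.ext (congrArg (fun z : Seg le1 le2 b => z.1) hxy)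
  map_fun' f := Empty.elim f
  map_rel' r _ := by cases r <;> exact Iff.rfl

theorem Seg.range_incl (hab : a ≤ b) : Set.range (Seg.incl le1 le2 hab) = {x | x.1 < a} :=
  Set.ext fun x => ⟨by rintro ⟨y, rfl⟩; exact y.2, fun hx => ⟨⟨x.1, hx⟩, rfl⟩⟩

/-- The segment below `a` is a Σ₂-elementary substructure of the segment below `b`: the condition
that defines `≤₂` in `IsR2Pair`. -/
abbrev Sigma2ElemSub (le1 le2 : Ordinal → Ordinal → Prop) (a b : Ordinal) : Prop :=
  ElemSub (fun _ φ => IsSigma2 φ) le1 le2 a b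

theorem sigma2ElemSub_iff : Sigma2ElemSub le1 le2 a b ↔
    ∃ hab : a ≤ b, IsSigma2Elementary ordLang (Seg.incl le1 le2 hab) :=
  Iff.rfl

theorem Sigma2ElemSub.refl (a : Ordinal) : Sigma2ElemSub le1 le2 a a :=
  ⟨le_rfl, fun _ _ _ _ => Iff.rfl⟩

theorem sigma2ElemSub_csSup {S : Set Ordinal} (hne : S.Nonempty) (hbdd : BddAbove S)
    (hS : ∀ b ∈ S, Sigma2ElemSub le1 le2 a b) : Sigma2ElemSub le1 le2 a (sSup S) := by
  choose hle hel using fun b : S => sigma2ElemSub_iff.1 (hS b b.2)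
  have le_sup (b : S) : (b : Ordinal) ≤ sSup S := le_csSup hbdd b.2
  have : Nonempty S := hne.to_subtype
  have a_le_sup : a ≤ sSup S := hne.elim fun b hb => (hle ⟨b, hb⟩).trans (le_sup ⟨b, hb⟩)
  refine sigma2ElemSub_iff.2 ⟨a_le_sup, ?_⟩
  refine isSigma2Elementary_of_directed (f := fun b : S => Seg.incl le1 le2 (le_sup b))
    ?_ ?_ (fun _ => rfl) hel
  · simp only [Seg.range_incl]
    exact Monotone.directed_le fun _ _ hbc _ hx => hx.out.trans_le hbc
  · simp only [Seg.range_incl, Set.eq_univ_iff_forall, Set.mem_iUnion]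
    intro x
    obtain ⟨b, hb, hxb⟩ := exists_lt_of_lt_csSup hne x.2
    exact ⟨⟨b, hb⟩, hxb⟩

end Segments

section Chains

variable {le1 le2 : Ordinal → Ordinal → Prop} {a b : Ordinal} {n : ℕ}

/-- There is a `<₂`-chain of length `n` below `ν`, so that `1^∞` is the least `ν` with chains of
every length; the formulation follows `OneInfty`. -/
def HasLt2Chain (le2 : Ordinal → Ordinal → Prop) (n : ℕ) (ν : Ordinal) : Prop :=
  ∃ β : Fin n → Ordinal, (∀ i, β i < ν) ∧
    ∀ (i : ℕ) (hi : i + 1 < n), Lt2 le2 (β ⟨i, Nat.lt_of_succ_lt hi⟩) (β ⟨i + 1, hi⟩)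

theorem HasLt2Chain.mono (h : HasLt2Chain le2 n a) (hab : a ≤ b) : HasLt2Chain le2 n b :=
  let ⟨β, hlt, hβ⟩ := h
  ⟨β, fun i => (hlt i).trans_le hab, hβ⟩

/-- The symbol `≤₂` of the language of `ℛ₂`, retyped for use in formulas. -/
def le2Symbol : ordLang.Relations 2 := ordRel.le2

/-- The quantifier-free formula `x <₂ y` in the language of `ℛ₂`. -/
def lt2Formula (i j : Fin n) : ordLang.BoundedFormula (Fin 0) n :=
  le2Symbol.boundedFormula₂ (&i) (&j) ⊓ ∼((&i).bdEqual (&j))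

theorem isQF_lt2Formula (i j : Fin n) : (lt2Formula i j).IsQF :=
  (BoundedFormula.IsAtomic.rel _ _).isQF.inf (BoundedFormula.IsAtomic.equal _ _).isQF.not

theorem realize_lt2Formula {i j : Fin n} {v : Fin 0 → Seg le1 le2 b} {xs : Fin n → Seg le1 le2 b} :
    (lt2Formula i j).Realize v xs ↔ Lt2 le2 (xs i).1 (xs j).1 := by
  rw [lt2Formula, BoundedFormula.realize_inf, BoundedFormula.realize_not,
    BoundedFormula.realize_rel₂, BoundedFormula.realize_bdEqual]
  exact and_congr Iff.rfl (not_congr Subtype.ext_iff)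

/-- The Σ₁-sentence asserting that there is a `<₂`-chain of length `n`. -/
noncomputable def lt2ChainSentence (n : ℕ) : ordLang.Formula (Fin 0) :=
  (BoundedFormula.iInf fun i : {i : Fin n // i.1 + 1 < n} =>
    lt2Formula i.1 ⟨i.1 + 1, i.2⟩).exs

theorem isSigma2_lt2ChainSentence (n : ℕ) : IsSigma2 (lt2ChainSentence n) :=
  (IsSigma2.of_isPi1 (.of_isQF (isQF_iInf fun _ => isQF_lt2Formula _ _))).exs

theorem realize_lt2ChainSentence {v : Fin 0 → Seg le1 le2 b} :
    (lt2ChainSentence n).Realize v ↔ HasLt2Chain le2 n b := by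
  simp only [lt2ChainSentence, BoundedFormula.realize_exs, BoundedFormula.realize_iInf,
    realize_lt2Formula, Subtype.forall]
  exact ⟨fun ⟨xs, hxs⟩ => ⟨fun i => (xs i).1, fun i => (xs i).2, fun i hi => hxs ⟨i, _⟩ hi⟩,
    fun ⟨β, hlt, hβ⟩ => ⟨fun i => ⟨β i, hlt i⟩, fun i hi => hβ i hi⟩⟩

theorem Sigma2ElemSub.hasLt2Chain_iff (h : Sigma2ElemSub le1 le2 a b) :
    HasLt2Chain le2 n a ↔ HasLt2Chain le2 n b := by
  obtain ⟨_, hel⟩ := sigma2ElemSub_iff.1 h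
  simpa only [realize_lt2ChainSentence] using
    hel 0 (lt2ChainSentence n) (isSigma2_lt2ChainSentence n) Fin.elim0

theorem hasLt2Chain_oneInfty (h : OneInfty le2 ≠ 0) (n : ℕ) :
    HasLt2Chain le2 n (OneInfty le2) := by
  suffices {ν | ∀ n, HasLt2Chain le2 n ν}.Nonempty from csInf_mem this n
  by_contra hempty
  refine h ?_
  change sInf {ν | ∀ n, HasLt2Chain le2 n ν} = 0
  rw [Set.not_nonempty_iff_eq_empty.1 hempty, Ordinal.sInf_empty]

theorem Sigma2ElemSub.lt_oneInfty (h : Sigma2ElemSub le1 le2 a b) (ha : a < OneInfty le2) :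
    b < OneInfty le2 := by
  by_contra! hb
  have chains_below_a (n : ℕ) : HasLt2Chain le2 n a :=
    h.hasLt2Chain_iff.2 ((hasLt2Chain_oneInfty ha.ne_bot n).mono hb)
  exact ha.not_ge (csInf_le' chains_below_a)

end Chains

theorem stmt10 (le1 le2 : Ordinal → Ordinal → Prop) (h : IsR2Pair le1 le2)
    (α : Ordinal) (hα : α < OneInfty le2) :
    ∃ m : Ordinal, (le2 α m ∧ ∀ β, le2 α β → β ≤ m) ∧
      (m = α ↔ ¬ ∃ β, Lt2 le2 α β) := by
  have le2_iff (β : Ordinal) : le2 α β ↔ Sigma2ElemSub le1 le2 α β := h.2 α β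
  have bounded : BddAbove {β | le2 α β} :=
    ⟨OneInfty le2, fun β hβ => (((le2_iff β).1 hβ).lt_oneInfty hα).le⟩
  have le2_sup : le2 α (sSup {β | le2 α β}) := (le2_iff _).2 <|
    sigma2ElemSub_csSup ⟨α, (le2_iff α).2 (.refl α)⟩ bounded fun β hβ => (le2_iff β).1 hβ
  have le_sup (β : Ordinal) (hβ : le2 α β) : β ≤ sSup {β | le2 α β} := le_csSup bounded hβ
  refine ⟨_, ⟨le2_sup, le_sup⟩, ?_, fun no_succ => ?_⟩
  · rintro sup_eq ⟨β, hβ, hne⟩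
    exact hne (((le2_iff β).1 hβ).1.antisymm ((le_sup β hβ).trans_eq sup_eq))
  · by_contra hne
    exact no_succ ⟨_, le2_sup, Ne.symm hne⟩
end
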